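/- arXiv:1107.3462 — 6 statements merged into one kernel-verified Lean document; each statement's English description precedes it below -/
import Mathlib

section
/- Let χ : ZMod m → ℝ be any solution of the 1D linear nearest-neighbour cell problem with coefficient ψ and parameter a. Then the constant value of j ↦ ψ(j)·(a + Dχ(j)) equals H(ψ)·a; equivalently, a + Dχ(j) = H(ψ)·a/ψ(j) for every j ∈ ZMod m. Conversely, every χ : ZMod m → ℝ satisfying a + Dχ(j) = H(ψ)·a/ψ(j) for all j solves the cell problem. -/
/-!
If the flux `ψ j * (a + Dχ j)` has constant value `C`, then `a + Dχ j = C / ψ j`. Summing over the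
cyclic group `ZMod m`, the differences `Dχ` telescope to zero, because translation by `1` permutes
`ZMod m`. This leaves `m * a = C * ∑ 1 / ψ i`, that is, `C = H(ψ) * a`. The other claims follow by
multiplying or dividing by `ψ j`.
-/

/-- Any solution `χ` of the 1D linear nearest-neighbour cell problem
(with coefficient `ψ > 0` and parameter `a`) satisfies
`ψ j * (a + Dχ j) = H(ψ) * a` for all `j`, and `χ` solves the cell problem iff
`a + Dχ j = H(ψ) * a / ψ j` for all `j`, where `H(ψ)` is the harmonic mean of `ψ`. -/
theorem stmt0 (m : ℕ) [NeZero m] (ψ : ZMod m → ℝ) (hψ : ∀ j, 0 < ψ j) (a : ℝ)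
    (χ : ZMod m → ℝ) :
    ((∃ C : ℝ, ∀ j : ZMod m, ψ j * (a + (χ (j + 1) - χ j)) = C) →
      ∀ j : ZMod m, ψ j * (a + (χ (j + 1) - χ j)) =
        ((1 / (m : ℝ)) * ∑ i : ZMod m, 1 / ψ i)⁻¹ * a)
    ∧
    ((∃ C : ℝ, ∀ j : ZMod m, ψ j * (a + (χ (j + 1) - χ j)) = C) ↔
      ∀ j : ZMod m, a + (χ (j + 1) - χ j) =
        ((1 / (m : ℝ)) * ∑ i : ZMod m, 1 / ψ i)⁻¹ * a / ψ j) := by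
  have hne : ∀ j, ψ j ≠ 0 := fun j => (hψ j).ne'
  have key : (∃ C : ℝ, ∀ j : ZMod m, ψ j * (a + (χ (j + 1) - χ j)) = C) →
      ∀ j : ZMod m, ψ j * (a + (χ (j + 1) - χ j)) =
        ((1 / (m : ℝ)) * ∑ i : ZMod m, 1 / ψ i)⁻¹ * a := by
    rintro ⟨C, hC⟩ j
    rw [hC j]
    have hm : (m : ℝ) ≠ 0 := Nat.cast_ne_zero.mpr (NeZero.ne m)
    have hS : 0 < ∑ i : ZMod m, 1 / ψ i :=
      Finset.sum_pos (fun i _ => one_div_pos.mpr (hψ i)) Finset.univ_nonempty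
    have hshift : ∑ i : ZMod m, χ (i + 1) = ∑ i : ZMod m, χ i :=
      Equiv.sum_comp (Equiv.addRight (1 : ZMod m)) χ
    have hsum : (m : ℝ) * a = C * ∑ i : ZMod m, 1 / ψ i := by
      calc (m : ℝ) * a = ∑ i : ZMod m, (a + (χ (i + 1) - χ i)) := by
            simp [Finset.sum_add_distrib, Finset.sum_sub_distrib, hshift, ZMod.card]
        _ = ∑ i : ZMod m, C * (1 / ψ i) := by
            refine Finset.sum_congr rfl fun i _ => ?_
            rw [mul_one_div, eq_div_iff (hne i), mul_comm, hC i]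
        _ = C * ∑ i : ZMod m, 1 / ψ i := by rw [Finset.mul_sum]
    rw [eq_inv_mul_iff_mul_eq₀ (mul_ne_zero (one_div_ne_zero hm) hS.ne'), mul_assoc,
      mul_comm _ C, ← hsum, ← mul_assoc, one_div_mul_cancel hm, one_mul]
  refine ⟨key, fun h j => ?_, fun h =>
    ⟨((1 / (m : ℝ)) * ∑ i : ZMod m, 1 / ψ i)⁻¹ * a, fun j => ?_⟩⟩
  · rw [eq_div_iff (hne j), mul_comm, key h j]
  · rw [h j, mul_div_cancel₀ _ (hne j)]
end

section
/- For every solution χ of the 1D linear nearest-neighbour cell problem with coefficient ψ and parameter a, the homogenized energy density Φ⁰(a) := (1/m) Σ_{j ∈ ZMod m} ψ(j)·(a + Dχ(j))²/2 equals H(ψ)·a²/2; i.e., the effective (homogenized) spring constant is the harmonic mean of the spring constants ψ(j). -/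
/-!
With `S = ∑ j, 1 / ψ j` and `C` the constant value of the flux `ψ j * (a + Dχ j)`, the differences
`Dχ` sum to zero over a period, so summing `a + Dχ j = C / ψ j` gives `m * a = C * S`. Writing one
factor of the energy as the flux, its average is `C * a / 2`, and `C = m * a / S = H(ψ) * a`.
-/

/-- For every solution `χ` of the 1D linear nearest-neighbour cell
problem with coefficient `ψ` and parameter `a`, the homogenized energy density
`(1/m) ∑ j, ψ j * (a + Dχ j)² / 2` equals `H(ψ) * a² / 2`, with `H(ψ)` the
harmonic mean of `ψ`. -/
theorem stmt1 (m : ℕ) [NeZero m] (ψ : ZMod m → ℝ) (hψ : ∀ j, 0 < ψ j) (a : ℝ)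
    (χ : ZMod m → ℝ)
    (hχ : ∃ C : ℝ, ∀ j : ZMod m, ψ j * (a + (χ (j + 1) - χ j)) = C) :
    (1 / (m : ℝ)) * ∑ j : ZMod m, ψ j * (a + (χ (j + 1) - χ j)) ^ 2 / 2 =
      ((1 / (m : ℝ)) * ∑ j : ZMod m, 1 / ψ j)⁻¹ * a ^ 2 / 2 := by
  obtain ⟨C, hC⟩ := hχ
  have hm : (m : ℝ) ≠ 0 := Nat.cast_ne_zero.mpr (NeZero.ne m)
  have hS : 0 < ∑ j : ZMod m, 1 / ψ j :=
    Finset.sum_pos (fun j _ => one_div_pos.mpr (hψ j)) Finset.univ_nonempty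
  -- The shift `j ↦ j + 1` permutes the period, so the differences of `χ` cancel.
  have hsum : ∑ j : ZMod m, (a + (χ (j + 1) - χ j)) = m * a := by
    have hshift : ∑ j : ZMod m, χ (j + 1) = ∑ j, χ j :=
      Equiv.sum_comp (Equiv.addRight (1 : ZMod m)) χ
    simp [Finset.sum_add_distrib, Finset.sum_sub_distrib, hshift, ZMod.card]
  have hCS : C * ∑ j : ZMod m, 1 / ψ j = m * a := by
    rw [← hsum, Finset.mul_sum]
    refine Finset.sum_congr rfl fun j _ => ?_
    rw [← hC j]
    field_simp [(hψ j).ne']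
  have henergy : ∑ j : ZMod m, ψ j * (a + (χ (j + 1) - χ j)) ^ 2 / 2 = C / 2 * (m * a) := by
    rw [← hsum, Finset.mul_sum]
    refine Finset.sum_congr rfl fun j _ => ?_
    rw [← hC j]
    ring
  rw [henergy]
  generalize (∑ j : ZMod m, 1 / ψ j) = S at hS hCS ⊢
  have hS0 := hS.ne'
  field_simp
  linear_combination a * hCS
end

section
/- There exists exactly one χ : ZMod m → ℝ with zero mean, Σ_{j ∈ ZMod m} χ(j) = 0, that solves the 1D linear nearest-neighbour cell problem with coefficient ψ and parameter a. -/
/-!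
A solution has flux `C`, hence forward difference `C / ψ - a`. On the cyclic group `ZMod m`
a function is a forward difference exactly when its sum vanishes
(`sum_forward_difference`, `exists_primitive`), so necessarily `C * ∑ 1 / ψ = m * a`, which
determines `C` because `∑ 1 / ψ > 0`. A primitive is unique up to an additive
constant (`const_of_shift_invariant`), and that constant is fixed by the zero-mean condition.
-/

lemma sum_forward_difference (m : ℕ) [NeZero m] (χ : ZMod m → ℝ) :
    ∑ j : ZMod m, (χ (j + 1) - χ j) = 0 := by
  rw [Finset.sum_sub_distrib, sub_eq_zero]
  exact Equiv.sum_comp (Equiv.addRight (1 : ZMod m)) χ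

lemma sum_range_eq_sum_zmod (m : ℕ) [NeZero m] (g : ZMod m → ℝ) :
    ∑ i ∈ Finset.range m, g (i : ZMod m) = ∑ j : ZMod m, g j := by
  refine Finset.sum_bij' (fun i _ => (i : ZMod m)) (fun j _ => j.val) ?_ ?_ ?_ ?_ ?_
  · simp
  · intro j _
    simpa using ZMod.val_lt j
  · intro i hi
    exact ZMod.val_cast_of_lt (Finset.mem_range.mp hi)
  · simp
  · simp

/-- The partial sums of `g` along `0, 1, 2, …` are `m`-periodic when the total sum vanishes,
so they descend to a function on `ZMod m`. -/
lemma exists_primitive (m : ℕ) [NeZero m] (g : ZMod m → ℝ) (hg : ∑ j : ZMod m, g j = 0) :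
    ∃ χ : ZMod m → ℝ, ∀ j, χ (j + 1) - χ j = g j := by
  let S : ℕ → ℝ := fun n => ∑ i ∈ Finset.range n, g (i : ZMod m)
  have hper : Function.Periodic S m := by
    intro n
    simp only [S]
    rw [add_comm, Finset.sum_range_add, sum_range_eq_sum_zmod, hg]
    simp
  refine ⟨fun j => S j.val, fun j => ?_⟩
  have hval : (j + 1).val = (j.val + 1) % m := by
    rw [← ZMod.val_natCast]
    simp
  simp only [hval, hper.map_mod_nat]
  simp [S, Finset.sum_range_succ]

lemma const_of_shift_invariant (m : ℕ) [NeZero m] (d : ZMod m → ℝ)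
    (hd : ∀ j, d (j + 1) = d j) (j : ZMod m) : d j = d 0 := by
  have h : ∀ n : ℕ, d (n : ZMod m) = d 0 := by
    intro n
    induction n with
    | zero => simp
    | succ k ih => rw [Nat.cast_succ, hd, ih]
  simpa using h j.val

/-- There exists exactly one zero-mean `χ : ZMod m → ℝ` solving the
1D linear nearest-neighbour cell problem with coefficient `ψ` and parameter `a`,
i.e. such that `j ↦ ψ j * (a + (χ (j+1) - χ j))` is constant. -/
theorem stmt2 (m : ℕ) [NeZero m] (ψ : ZMod m → ℝ) (hψ : ∀ j, 0 < ψ j) (a : ℝ) :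
    ∃! χ : ZMod m → ℝ, (∑ j : ZMod m, χ j = 0) ∧
      ∃ C : ℝ, ∀ j : ZMod m, ψ j * (a + (χ (j + 1) - χ j)) = C := by
  have hm : (m : ℝ) ≠ 0 := Nat.cast_ne_zero.mpr (NeZero.ne m)
  have hP : 0 < ∑ j : ZMod m, (ψ j)⁻¹ :=
    Finset.sum_pos (fun j _ => inv_pos.mpr (hψ j)) Finset.univ_nonempty
  set P := ∑ j : ZMod m, (ψ j)⁻¹ with hPdef
  apply existsUnique_of_exists_of_unique
  · obtain ⟨χ, hχ⟩ := exists_primitive m (fun j => (m * a / P) * (ψ j)⁻¹ - a) (by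
      rw [Finset.sum_sub_distrib, ← Finset.mul_sum, ← hPdef]
      simp [hP.ne', ZMod.card])
    refine ⟨fun j => χ j - (∑ i, χ i) / m, ?_, m * a / P, fun j => ?_⟩
    · rw [Finset.sum_sub_distrib]
      simp only [Finset.sum_const, Finset.card_univ, ZMod.card, nsmul_eq_mul]
      field_simp
      ring
    · have hj := (hψ j).ne'
      rw [sub_sub_sub_cancel_right, hχ j]
      field_simp
      ring
  · rintro χ₁ χ₂ ⟨hs₁, C₁, h₁⟩ ⟨hs₂, C₂, h₂⟩
    have hdiff : ∀ (χ : ZMod m → ℝ) (C : ℝ),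
        (∀ j, ψ j * (a + (χ (j + 1) - χ j)) = C) →
        ∀ j, χ (j + 1) - χ j = C * (ψ j)⁻¹ - a := by
      intro χ C h j
      have hj := (hψ j).ne'
      rw [← h j]
      field_simp
      ring
    have hflux : ∀ (χ : ZMod m → ℝ) (C : ℝ),
        (∀ j, ψ j * (a + (χ (j + 1) - χ j)) = C) → C * P = m * a := by
      intro χ C h
      have h0 := sum_forward_difference m χ
      simp only [hdiff χ C h] at h0
      rw [Finset.sum_sub_distrib, ← Finset.mul_sum, ← hPdef] at h0
      simp only [Finset.sum_const, Finset.card_univ, ZMod.card, nsmul_eq_mul] at h0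
      linarith
    have hC : C₁ = C₂ :=
      mul_right_cancel₀ hP.ne' ((hflux χ₁ C₁ h₁).trans (hflux χ₂ C₂ h₂).symm)
    subst hC
    have hconst := const_of_shift_invariant m (fun j => χ₁ j - χ₂ j) (fun j => by
      have e₁ := hdiff χ₁ C₁ h₁ j
      have e₂ := hdiff χ₂ C₁ h₂ j
      linarith)
    have hsum : ∑ j, (χ₁ j - χ₂ j) = 0 := by
      rw [Finset.sum_sub_distrib, hs₁, hs₂, sub_zero]
    simp only [hconst, Finset.sum_const, Finset.card_univ, ZMod.card, nsmul_eq_mul] at hsum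
    have h0 := (mul_eq_zero.mp hsum).resolve_left hm
    funext j
    have := hconst j
    linarith
end

section
/- Let c ∈ ℝ. Among all g : ZMod m → ℝ with mean value (1/m) Σ_{j ∈ ZMod m} g(j) = c, the averaged quadratic energy (1/m) Σ_{j ∈ ZMod m} ψ(j)·g(j)²/2 attains its minimum, the minimum value equals H(ψ)·c²/2, and the minimizer is unique, given by g(j) = H(ψ)·c/ψ(j) for all j. -/
/-!
Completing the square: with `H` the harmonic mean of `ψ` and `g₀ j = H * c / ψ j`, the product
`ψ j * g₀ j = H * c` does not depend on `j`, so the cross term in the energy of `g₀ + (g - g₀)` is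
`H * c` times the mean of `g - g₀`. It vanishes when `g` has mean `c`, so the energy of `g` is
`H * c ^ 2 / 2` plus the energy of `g - g₀` (`energy_eq_add_energy_sub`). The excess is nonnegative
and, as `ψ > 0`, it is zero only for `g = g₀`.
-/

/-- The energy decomposition, for an arbitrary factor `a` in place of `1 / m`. -/
theorem energy_eq_add_energy_sub {ι : Type*} [Fintype ι] (a H c : ℝ) (ψ g : ι → ℝ)
    (hψ : ∀ j, 0 < ψ j) (hH : H * (a * ∑ j, 1 / ψ j) = 1) (hg : a * ∑ j, g j = c) :
    a * ∑ j, ψ j * g j ^ 2 / 2 =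
      H * c ^ 2 / 2 + a * ∑ j, ψ j * (g j - H * c / ψ j) ^ 2 / 2 := by
  have hpt : ∀ j, ψ j * g j ^ 2 / 2 = H * c * g j - (H * c) ^ 2 / 2 * (1 / ψ j)
      + ψ j * (g j - H * c / ψ j) ^ 2 / 2 := by
    intro j
    have := (hψ j).ne'
    field_simp
    ring
  rw [Finset.sum_congr rfl fun j _ => hpt j, Finset.sum_add_distrib, Finset.sum_sub_distrib,
    ← Finset.mul_sum, ← Finset.mul_sum]
  linear_combination H * c * hg - H * c ^ 2 / 2 * hH

/-- Among all `g : ZMod m → ℝ` with mean `c`, the averaged quadratic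
energy `(1/m) ∑ j, ψ j * (g j)² / 2` attains its minimum `H(ψ) * c² / 2`, and the
unique minimizer is `g j = H(ψ) * c / ψ j`. -/
theorem stmt3 (m : ℕ) [NeZero m] (ψ : ZMod m → ℝ) (hψ : ∀ j, 0 < ψ j) (c : ℝ) :
    let H : ℝ := ((1 / (m : ℝ)) * ∑ j : ZMod m, 1 / ψ j)⁻¹
    let g₀ : ZMod m → ℝ := fun j => H * c / ψ j
    ((1 / (m : ℝ)) * ∑ j : ZMod m, g₀ j = c) ∧
    ((1 / (m : ℝ)) * ∑ j : ZMod m, ψ j * g₀ j ^ 2 / 2 = H * c ^ 2 / 2) ∧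
    (∀ g : ZMod m → ℝ, (1 / (m : ℝ)) * ∑ j : ZMod m, g j = c →
      H * c ^ 2 / 2 ≤ (1 / (m : ℝ)) * ∑ j : ZMod m, ψ j * g j ^ 2 / 2) ∧
    (∀ g : ZMod m → ℝ, (1 / (m : ℝ)) * ∑ j : ZMod m, g j = c →
      (1 / (m : ℝ)) * ∑ j : ZMod m, ψ j * g j ^ 2 / 2 = H * c ^ 2 / 2 → g = g₀) := by
  intro H g₀
  have hm : (0 : ℝ) < 1 / (m : ℝ) :=
    one_div_pos.mpr (Nat.cast_pos.mpr (NeZero.pos m))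
  have hpos : 0 < (1 / (m : ℝ)) * ∑ j : ZMod m, 1 / ψ j :=
    mul_pos hm (Finset.sum_pos (fun j _ => one_div_pos.mpr (hψ j)) Finset.univ_nonempty)
  have hH : H * ((1 / (m : ℝ)) * ∑ j : ZMod m, 1 / ψ j) = 1 := inv_mul_cancel₀ hpos.ne'
  have hmean : (1 / (m : ℝ)) * ∑ j : ZMod m, g₀ j = c := by
    have hsum : ∑ j : ZMod m, g₀ j = H * c * ∑ j : ZMod m, 1 / ψ j := by
      rw [Finset.mul_sum]
      exact Finset.sum_congr rfl fun j _ => div_eq_mul_one_div _ _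
    rw [hsum]
    linear_combination c * hH
  have hdecomp := fun g hg => energy_eq_add_energy_sub (1 / (m : ℝ)) H c ψ g hψ hH hg
  have hnonneg : ∀ (g : ZMod m → ℝ) (j : ZMod m), 0 ≤ ψ j * (g j - H * c / ψ j) ^ 2 / 2 :=
    fun g j => div_nonneg (mul_nonneg (hψ j).le (sq_nonneg _)) zero_le_two
  refine ⟨hmean, ?_, fun g hg => ?_, fun g hg hE => ?_⟩
  · rw [hdecomp g₀ hmean]
    simp [g₀]
  · rw [hdecomp g hg]
    exact le_add_of_nonneg_right
      (mul_nonneg hm.le (Finset.sum_nonneg fun j _ => hnonneg g j))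
  · rw [hdecomp g hg, add_eq_left, mul_eq_zero, or_iff_right hm.ne',
      Finset.sum_eq_zero_iff_of_nonneg fun j _ => hnonneg g j] at hE
    funext j
    have hj := hE j (Finset.mem_univ j)
    simpa [(hψ j).ne', sub_eq_zero] using hj
end

section
/- A shift vector q : ZMod m → ℝ with q(0) = 0 is a critical point of the MQC element energy Ẽ (the partial derivative of Ẽ with respect to each component q(γ), γ ≠ 0, vanishes) if and only if there is a solution χ of the 1D linear nearest-neighbour cell problem with the same coefficient ψ and parameter a such that q(β) = χ(β) − χ(0) for all β ∈ ZMod m. -/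
/-!
Write `σ β = ψ β * (a + (q (β+1) - q β))` for the stress. The component `q γ` enters only the
bonds `γ - 1` and `γ`, so `∂E/∂q γ = (σ (γ - 1) - σ γ) / m` (`hasDerivAt_energy`). Hence `q` is
critical iff `σ` does not jump at any `γ ≠ 0`; going once around the cycle from `0`, this already
forces `σ` to be constant (`eq_zero_of_no_jump`), which is the cell problem for `q` itself.
Conversely the cell problem only sees differences of `χ`, so it passes from `χ` to `χ - χ 0`.
-/

theorem hasDerivAt_update_apply {ι : Type*} [DecidableEq ι] (q : ι → ℝ) (γ β : ι) (s : ℝ) :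
    HasDerivAt (fun t => Function.update q γ t β) (if β = γ then 1 else 0) s := by
  by_cases h : β = γ
  · subst h
    simpa using hasDerivAt_id' s
  · simpa [h] using hasDerivAt_const s (q β)

/-- The partial derivative of the element energy is the stress jump at `γ`, divided by `m`.
For `m = 1` both bonds coincide and the formula still holds, with value `0`. -/
theorem hasDerivAt_energy (m : ℕ) [NeZero m] (ψ : ZMod m → ℝ) (a : ℝ) (q : ZMod m → ℝ)
    (γ : ZMod m) :
    HasDerivAt (fun t => (1 / (m : ℝ)) * ∑ β : ZMod m, ψ β *
        (a + (Function.update q γ t (β + 1) - Function.update q γ t β)) ^ 2 / 2)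
      ((1 / (m : ℝ)) * (ψ (γ - 1) * (a + (q (γ - 1 + 1) - q (γ - 1)))
        - ψ γ * (a + (q (γ + 1) - q γ)))) (q γ) := by
  have hterm : ∀ β ∈ (Finset.univ : Finset (ZMod m)), HasDerivAt
      (fun t => ψ β * (a + (Function.update q γ t (β + 1) - Function.update q γ t β)) ^ 2 / 2)
      (ψ β * (a + (q (β + 1) - q β)) *
        ((if β = γ - 1 then 1 else 0) - (if β = γ then 1 else 0))) (q γ) := by
    intro β _
    have h := (((((hasDerivAt_update_apply q γ (β + 1) (q γ)).sub
      (hasDerivAt_update_apply q γ β (q γ))).const_add a).pow 2).const_mul (ψ β)).div_const 2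
    refine h.congr_deriv ?_
    simp only [Pi.sub_apply, Function.update_eq_self, eq_sub_iff_add_eq]
    push_cast
    ring
  refine ((HasDerivAt.fun_sum hterm).const_mul (1 / (m : ℝ))).congr_deriv ?_
  simp [mul_sub, Finset.sum_sub_distrib]

/-- Induction along `0, 1, 2, …`: a step that would wrap around lands on `0`, where there is
nothing to prove, so the missing condition at `γ = 0` is not needed. -/
theorem eq_zero_of_no_jump (m : ℕ) [NeZero m] (σ : ZMod m → ℝ)
    (h : ∀ γ : ZMod m, γ ≠ 0 → σ (γ - 1) = σ γ) (j : ZMod m) : σ j = σ 0 := by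
  have key : ∀ k : ℕ, σ (k : ZMod m) = σ 0 := by
    intro k
    induction k with
    | zero => simp
    | succ k ih =>
      by_cases hk : ((k + 1 : ℕ) : ZMod m) = 0
      · rw [hk]
      · rw [← h _ hk, ← ih]
        simp
  obtain ⟨k, rfl⟩ := ZMod.natCast_zmod_surjective j
  exact key k


/-- A shift vector `q : ZMod m → ℝ` with `q 0 = 0` is a critical
point of the MQC element energy `Ẽ(q) = (1/m) ∑ β, ψ β * (a + q (β+1) - q β)² / 2`
if and only if there is a solution `χ` of the 1D linear nearest-neighbour cell
problem (with the same `ψ` and `a`) such that `q β = χ β - χ 0` for all `β`. -/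
theorem stmt7 (m : ℕ) [NeZero m] (ψ : ZMod m → ℝ) (hψ : ∀ j, 0 < ψ j) (a : ℝ)
    (q : ZMod m → ℝ) (hq0 : q 0 = 0) :
    let E : (ZMod m → ℝ) → ℝ :=
      fun p => (1 / (m : ℝ)) * ∑ β : ZMod m, ψ β * (a + (p (β + 1) - p β)) ^ 2 / 2
    (∀ γ : ZMod m, γ ≠ 0 → deriv (fun t => E (Function.update q γ t)) (q γ) = 0) ↔
      ∃ χ : ZMod m → ℝ,
        (∃ C : ℝ, ∀ j : ZMod m, ψ j * (a + (χ (j + 1) - χ j)) = C) ∧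
        ∀ β : ZMod m, q β = χ β - χ 0 := by
  intro E
  have hm : (1 / (m : ℝ)) ≠ 0 := one_div_ne_zero (Nat.cast_ne_zero.mpr (NeZero.ne m))
  have hder : ∀ γ, deriv (fun t => E (Function.update q γ t)) (q γ) = _ :=
    fun γ => (hasDerivAt_energy m ψ a q γ).deriv
  constructor
  · intro h
    refine ⟨q, ⟨_, eq_zero_of_no_jump m (fun j => ψ j * (a + (q (j + 1) - q j))) ?_⟩, ?_⟩
    · intro γ hγ
      have h1 := h γ hγ
      rw [hder] at h1
      exact sub_eq_zero.mp ((mul_eq_zero.mp h1).resolve_left hm)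
    · simp [hq0]
  · rintro ⟨χ, ⟨C, hC⟩, hq⟩ γ _
    have hσ : ∀ j, ψ j * (a + (q (j + 1) - q j)) = C := by
      intro j
      rw [hq, hq, sub_sub_sub_cancel_right, hC]
    rw [hder, hσ, hσ, sub_self, mul_zero]
end

section
/- A function R solves the micro-problem on the sampling domain S = x₀ + εP if and only if the function χ : ℝ^d → ℝ^d defined by χ(y) = (R(x₀ + εy) − u_lin(x₀ + εy))/ε is a ℤ^d-periodic zero-mean solution of the cell problem with the same gradient matrix F. Moreover, in that case the averaged micro energy equals the homogenized energy density: (1/m) Σ_{α<m} V_α((D_r R(x₀ + ε p_α))_{r ∈ R_α}) = (1/m) Σ_{α<m} V_α((F r + D_{y,r} χ(p_α))_{r ∈ R_α}). (This is Part 1 of the equivalence theorem: the element energies of the homogenized quasicontinuum method and of the finite element method for the homogenized equations coincide.) -/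
/-!
The proof is the change of variables `x = x₀ + ε y`, a bijection of `ℝ^d` that carries `P` to the
sampling domain and `ℤ^d`-translations to `εℤ^d`-translations. Since `u_lin` is affine with gradient
`F`, the micro strains of `R` are exactly the cell strains `F r + D_{y,r} χ(p_α)` of the rescaled
state `χ`, with no periodicity needed (`strain_eq`); this already gives the equality of energies.
Periodicity and zero mean transfer because `ε ≠ 0`. The two Euler–Lagrange equations agree because
the test functions correspond through `σ(y) = ε⁻¹ s(x₀ + ε y)`, with inverse
`s(x) = ε σ(ε⁻¹ (x - x₀))`, and this correspondence preserves difference quotients.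
-/

/-- The discrete strain of `R` at `x₀ + ε p` in direction `r` is `F r` plus the increment of the
rescaled corrector `y ↦ (R (x₀ + ε y) - (F (x₀ + ε y) + c)) / ε`. -/
theorem strain_eq {d : ℕ} (F : Matrix (Fin d) (Fin d) ℝ) {ε : ℝ} (hε : ε ≠ 0)
    (x₀ c p r : Fin d → ℝ) (R : (Fin d → ℝ) → (Fin d → ℝ)) :
    ε⁻¹ • (R (x₀ + ε • p + ε • r) - R (x₀ + ε • p)) =
      F.mulVec r + (ε⁻¹ • (R (x₀ + ε • (p + r)) - (F.mulVec (x₀ + ε • (p + r)) + c)) -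
        ε⁻¹ • (R (x₀ + ε • p) - (F.mulVec (x₀ + ε • p) + c))) := by
  have h : x₀ + ε • p + ε • r = x₀ + ε • (p + r) := by rw [smul_add, add_assoc]
  rw [h]
  simp only [Matrix.mulVec_add, Matrix.mulVec_smul]
  ext i
  simp only [Pi.add_apply, Pi.sub_apply, Pi.smul_apply, smul_eq_mul]
  field_simp
  ring

/-- Part 1 of the equivalence theorem: `R` solves the micro-problem
on the sampling domain `S = x₀ + εP` iff `χ(y) = (R(x₀+εy) − u_lin(x₀+εy))/ε` is a
`ℤ^d`-periodic zero-mean solution of the cell problem with the same gradient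
matrix `F`; and in that case, the averaged micro energy equals the homogenized
energy density. -/
theorem stmt11 (d m : ℕ) [NeZero m] [DecidableEq (Fin d → ℝ)]
    (P : Fin m → (Fin d → ℝ))
    (hPrange : ∀ α i, P α i ∈ Set.Ico (0 : ℝ) 1)
    (hPinj : Function.Injective P)
    (Rset : Fin m → Finset (Fin d → ℝ))
    (hclose : ∀ (α : Fin m), ∀ r ∈ Rset α, ∃ (β : Fin m) (z : Fin d → ℤ),
      P α + r = P β + fun i => (z i : ℝ))
    (V : (α : Fin m) → (↥(Rset α) → (Fin d → ℝ)) → ℝ)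
    (hV : ∀ α, Differentiable ℝ (V α))
    (F : Matrix (Fin d) (Fin d) ℝ) (ε : ℝ) (hε : 0 < ε)
    (x₀ c : Fin d → ℝ)
    (R : (Fin d → ℝ) → (Fin d → ℝ)) :
    -- the affine macroscopic map
    let ulin : (Fin d → ℝ) → (Fin d → ℝ) := fun x => F.mulVec x + c
    -- ℤ^d-periodicity and zero mean (on the unit cell P) for cell functions
    let PerZ : ((Fin d → ℝ) → (Fin d → ℝ)) → Prop := fun σ =>
      ∀ (y : Fin d → ℝ) (z : Fin d → ℤ), σ (y + fun i => (z i : ℝ)) = σ y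
    let ZeroMean : ((Fin d → ℝ) → (Fin d → ℝ)) → Prop := fun σ =>
      ∑ α : Fin m, σ (P α) = 0
    -- the tuple of strains `F r + D_{y,r} χ (p_α)` of a cell function χ
    let gcell : ((Fin d → ℝ) → (Fin d → ℝ)) → (α : Fin m) →
        (↥(Rset α) → (Fin d → ℝ)) := fun χ α r =>
      F.mulVec (r : Fin d → ℝ) + (χ (P α + (r : Fin d → ℝ)) - χ (P α))
    -- the cell problem for χ
    let CellSolves : ((Fin d → ℝ) → (Fin d → ℝ)) → Prop := fun χ =>
      ∀ σ : (Fin d → ℝ) → (Fin d → ℝ), PerZ σ → ZeroMean σ →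
        ∑ α : Fin m, ∑ r : ↥(Rset α),
          fderiv ℝ (V α) (gcell χ α)
            (Pi.single r (σ (P α + (r : Fin d → ℝ)) - σ (P α))) = 0
    -- the tuple of discrete strains `D_r R (x₀ + ε p_α)` of the micro-state R
    let gmic : (α : Fin m) → (↥(Rset α) → (Fin d → ℝ)) :=
      fun α r =>
        ε⁻¹ • (R (x₀ + ε • P α + ε • (r : Fin d → ℝ)) - R (x₀ + ε • P α))
    -- the micro-problem on the sampling domain S = x₀ + εP
    let MicroSolves : Prop :=
      (∀ (x : Fin d → ℝ) (z : Fin d → ℤ),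
        R (x + ε • fun i => (z i : ℝ)) - ulin (x + ε • fun i => (z i : ℝ)) =
          R x - ulin x) ∧
      (∑ α : Fin m, (R (x₀ + ε • P α) - ulin (x₀ + ε • P α)) = 0) ∧
      (∀ s : (Fin d → ℝ) → (Fin d → ℝ),
        (∀ (x : Fin d → ℝ) (z : Fin d → ℤ),
          s (x + ε • fun i => (z i : ℝ)) = s x) →
        (∑ α : Fin m, s (x₀ + ε • P α) = 0) →
        ∑ α : Fin m, ∑ r : ↥(Rset α),
          fderiv ℝ (V α) (gmic α)
            (Pi.single r (ε⁻¹ •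
              (s (x₀ + ε • P α + ε • (r : Fin d → ℝ)) - s (x₀ + ε • P α)))) = 0)
    -- the rescaled micro-state
    let χR : (Fin d → ℝ) → (Fin d → ℝ) := fun y =>
      ε⁻¹ • (R (x₀ + ε • y) - ulin (x₀ + ε • y))
    -- conclusion: equivalence of the two problems, and equality of the element
    -- energies of HQC and of FEM for the homogenized equations
    (MicroSolves ↔ (PerZ χR ∧ ZeroMean χR ∧ CellSolves χR)) ∧
    (MicroSolves →
      (1 / (m : ℝ)) * ∑ α : Fin m, V α (gmic α) =
        (1 / (m : ℝ)) * ∑ α : Fin m, V α (gcell χR α)) := by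
  intro ulin PerZ ZeroMean gcell CellSolves gmic MicroSolves χR
  have hε0 : ε ≠ 0 := hε.ne'
  have hg : gmic = gcell χR := by
    funext α r
    exact strain_eq F hε0 x₀ c (P α) r R
  have hback : ∀ x : Fin d → ℝ, x₀ + ε • (ε⁻¹ • (x - x₀)) = x := by
    intro x
    rw [smul_inv_smul₀ hε0, add_sub_cancel]
  have hforth : ∀ y : Fin d → ℝ, ε⁻¹ • (x₀ + ε • y - x₀) = y := by
    intro y
    rw [add_sub_cancel_left, inv_smul_smul₀ hε0]
  have hmean : ZeroMean χR ↔
      ∑ α : Fin m, (R (x₀ + ε • P α) - ulin (x₀ + ε • P α)) = 0 := by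
    simp only [ZeroMean, χR, ← Finset.smul_sum]
    exact smul_eq_zero_iff_right (inv_ne_zero hε0)
  have hper : PerZ χR ↔ ∀ (x : Fin d → ℝ) (z : Fin d → ℤ),
      R (x + ε • fun i => (z i : ℝ)) - ulin (x + ε • fun i => (z i : ℝ)) = R x - ulin x := by
    constructor
    · intro h x z
      have h1 := h (ε⁻¹ • (x - x₀)) z
      simp only [χR] at h1
      rw [smul_add, ← add_assoc, hback] at h1
      exact smul_right_injective _ (inv_ne_zero hε0) h1
    · intro h y z
      simp only [χR]
      rw [smul_add, ← add_assoc, h]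
  have hEL : CellSolves χR ↔ ∀ s : (Fin d → ℝ) → (Fin d → ℝ),
      (∀ (x : Fin d → ℝ) (z : Fin d → ℤ), s (x + ε • fun i => (z i : ℝ)) = s x) →
      (∑ α : Fin m, s (x₀ + ε • P α) = 0) →
      ∑ α : Fin m, ∑ r : ↥(Rset α),
        fderiv ℝ (V α) (gmic α)
          (Pi.single r (ε⁻¹ •
            (s (x₀ + ε • P α + ε • (r : Fin d → ℝ)) - s (x₀ + ε • P α)))) = 0 := by
    rw [hg]
    constructor
    · intro h s hs hs0
      have h1 := h (fun y => ε⁻¹ • s (x₀ + ε • y))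
        (fun y z => by
          simp only
          rw [smul_add, ← add_assoc, hs])
        (by simp only [ZeroMean, ← Finset.smul_sum, hs0, smul_zero])
      simpa only [smul_add, ← add_assoc, ← smul_sub] using h1
    · intro h σ hσ hσ0
      have h1 := h (fun x => ε • σ (ε⁻¹ • (x - x₀)))
        (fun x z => by
          rw [add_sub_right_comm, smul_add, inv_smul_smul₀ hε0, hσ])
        (by
          simp only [hforth, ← Finset.smul_sum]
          rw [show ∑ α : Fin m, σ (P α) = 0 from hσ0, smul_zero])
      simpa only [add_assoc, ← smul_add, hforth, ← smul_sub, inv_smul_smul₀ hε0] using h1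
  refine ⟨?_, fun _ => by rw [hg]⟩
  rw [hper, hmean, hEL]
end
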